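/- arXiv:2505.18317 — 2 statements merged into one kernel-verified Lean document; each statement's English description precedes it below -/
import Mathlib

section
/- Let S be a nonempty bounded normalized set of real numbers, let M = sup_{s∈S} |s|, and let λ = (1/r)e^{iθ} be a non-real point of the open unit disc (so r > 1). Let (p_j)_{j≥0} be any sequence with all p_j ∈ S, and define (q_j)_{j≥0} by q_0 = p_0, q_1 = p_1 + 2r·cos(θ)·q_0, and q_{j+2} = p_{j+2} + 2r·cos(θ)·q_{j+1} − r²·q_j. If there is some index j such that |q_j| > M/(r − 1)², then λ is not a root of ∑_{j=0}^∞ p_j z^j. -/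
/-!
Let `β = r e^{iθ}` and `α = λ⁻¹ = r e^{-iθ}`, so that `α + β = 2 r cos θ` and `α β = r²`.
The recursion for `q` then says that `u (j + 1) = q (j + 1) - β * q j` (with `u 0 = q 0`)
satisfies `u (j + 1) = α * u j + p (j + 1)`. If `λ` is a root of the series, `u j` is minus the
rescaled tail `∑ m, p (j + 1 + m) λ ^ (m + 1)`, which has norm at most `M / (r - 1)`.

Since `q` is real, taking imaginary parts gives `|q j| * |Im β| ≤ M / (r - 1)`, and `Im β ≠ 0`
because `λ` is not real; so `q` is bounded. As `q` is expanded by the factor `β` of modulus `r`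
up to an error `M / (r - 1)`, a bounded `q` is bounded by `M / (r - 1) ^ 2`
(`norm_le_of_bounded_of_expanding`).
-/

/-- A set of real numbers is normalized if `1 ∈ S` and every nonzero element has
absolute value at least `1`. -/
def NormalizedSet (S : Set ℝ) : Prop :=
  1 ∈ S ∧ ∀ s ∈ S, s ≠ 0 → 1 ≤ |s|

/-- The 2-step recursion with parameters `a = 2 r cos θ` and `b = r ^ 2`:
`q 0 = p 0`, `q 1 = p 1 + a * q 0`, `q (j+2) = p (j+2) + a * q (j+1) - b * q j`. -/
def rec2 (a b : ℝ) (p : ℕ → ℝ) : ℕ → ℝ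
  | 0 => p 0
  | 1 => p 1 + a * p 0
  | j + 2 => p (j + 2) + a * rec2 a b p (j + 1) - b * rec2 a b p j

/-- A bounded orbit of a map that agrees with multiplication by `β` up to errors of size `B` stays
within `B / (‖β‖ - 1)` of the origin: the supremum `K` of the norms satisfies
`‖β‖ * K ≤ K + B`. -/
lemma norm_le_of_bounded_of_expanding (x : ℕ → ℂ) (β : ℂ) (B C : ℝ) (hβ : 1 < ‖β‖)
    (hC : ∀ n, ‖x n‖ ≤ C) (hB : ∀ n, ‖x (n + 1) - β * x n‖ ≤ B) (j : ℕ) :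
    ‖x j‖ ≤ B / (‖β‖ - 1) := by
  have hbdd : BddAbove (Set.range fun n => ‖x n‖) := ⟨C, by rintro _ ⟨n, rfl⟩; exact hC n⟩
  have hle : ∀ n, ‖x n‖ ≤ ⨆ n, ‖x n‖ := fun n => le_ciSup hbdd n
  have h1 : (⨆ n, ‖x n‖) ≤ ((⨆ n, ‖x n‖) + B) / ‖β‖ := by
    refine ciSup_le fun n => ?_
    rw [le_div_iff₀ (by linarith)]
    have h2 : ‖β * x n‖ ≤ ‖x (n + 1)‖ + ‖x (n + 1) - β * x n‖ := by
      simpa using norm_sub_le (x (n + 1)) (x (n + 1) - β * x n)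
    rw [norm_mul] at h2
    linarith [hle (n + 1), hB n]
  rw [le_div_iff₀ (by linarith)] at h1
  refine (hle j).trans ?_
  rw [le_div_iff₀ (by linarith)]
  linarith

/-- The tail of the power series of `p` at `lam` past index `j`, divided by `lam ^ j`. -/
noncomputable def scaledTail (p : ℕ → ℝ) (lam : ℂ) (j : ℕ) : ℂ :=
  lam * ∑' m, (p (m + (j + 1)) : ℂ) * lam ^ m

section
variable {p : ℕ → ℝ} {lam : ℂ} {M : ℝ}

lemma norm_term_le (hM : ∀ n, |p n| ≤ M) (k m : ℕ) :
    ‖(p (m + k) : ℂ) * lam ^ m‖ ≤ M * ‖lam‖ ^ m := by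
  rw [norm_mul, norm_pow, Complex.norm_real, Real.norm_eq_abs]
  exact mul_le_mul_of_nonneg_right (hM _) (by positivity)

lemma summable_shift (hM : ∀ n, |p n| ≤ M) (hl : ‖lam‖ < 1) (k : ℕ) :
    Summable fun m => (p (m + k) : ℂ) * lam ^ m :=
  Summable.of_norm_bounded ((summable_geometric_of_lt_one (norm_nonneg _) hl).mul_left M)
    (norm_term_le hM k)

lemma norm_scaledTail_le (hM : ∀ n, |p n| ≤ M) (hl : ‖lam‖ < 1) (j : ℕ) :
    ‖scaledTail p lam j‖ ≤ ‖lam‖ * (M * (1 - ‖lam‖)⁻¹) := by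
  rw [scaledTail, norm_mul]
  exact mul_le_mul_of_nonneg_left
    (tsum_of_norm_bounded ((hasSum_geometric_of_lt_one (norm_nonneg _) hl).mul_left M)
      (norm_term_le hM _)) (norm_nonneg _)

lemma tsum_shift_eq (hM : ∀ n, |p n| ≤ M) (hl : ‖lam‖ < 1) (k : ℕ) :
    ∑' m, (p (m + k) : ℂ) * lam ^ m = p k + scaledTail p lam k := by
  rw [(summable_shift hM hl k).tsum_eq_zero_add, scaledTail, ← tsum_mul_left]
  simp only [zero_add, pow_zero, mul_one]
  congr 1
  refine tsum_congr fun m => ?_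
  rw [show m + 1 + k = m + (k + 1) by ring]
  ring

lemma scaledTail_eq (hM : ∀ n, |p n| ≤ M) (hl : ‖lam‖ < 1) (j : ℕ) :
    scaledTail p lam j = lam * (p (j + 1) + scaledTail p lam (j + 1)) := by
  rw [← tsum_shift_eq hM hl (j + 1)]
  rfl

/-- If `lam` is a root of the series, dividing by the factor belonging to the root `lam` leaves the
tails of the series as coefficients; hence the one-step recursion for `rec2` with multiplier `β`. -/
lemma rec2_sub_eq (hM : ∀ n, |p n| ≤ M) (hl : ‖lam‖ < 1)
    (h0 : ∑' n, (p n : ℂ) * lam ^ n = 0) {a b : ℝ} {α β : ℂ} (hα : α * lam = 1)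
    (ha : (a : ℂ) = α + β) (hb : (b : ℂ) = α * β) (j : ℕ) :
    (rec2 a b p (j + 1) : ℂ) - β * rec2 a b p j = -scaledTail p lam (j + 1) := by
  have step : ∀ j, α * scaledTail p lam j = p (j + 1) + scaledTail p lam (j + 1) := fun j => by
    rw [scaledTail_eq hM hl j, ← mul_assoc, hα, one_mul]
  induction j with
  | zero =>
    have h1 := tsum_shift_eq hM hl 0
    simp only [add_zero, h0] at h1
    have h2 := step 0
    simp only [rec2, Complex.ofReal_add, Complex.ofReal_mul, ha, zero_add] at h2 ⊢
    linear_combination -α * h1 - h2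
  | succ j ih =>
    have h2 := step (j + 1)
    simp only [rec2, Complex.ofReal_add, Complex.ofReal_sub, Complex.ofReal_mul, ha, hb]
    linear_combination α * ih - h2

end

theorem stmt4 (S : Set ℝ) (hne : S.Nonempty) (hbd : Bornology.IsBounded S)
    (hnorm : NormalizedSet S)
    (M : ℝ) (hM : M = sSup ((fun s => |s|) '' S))
    (r θ : ℝ) (hr : 1 < r)
    (lam : ℂ) (hlam : lam = (1 / (r : ℂ)) * Complex.exp (θ * Complex.I))
    (him : lam.im ≠ 0)
    (p : ℕ → ℝ) (hp : ∀ j, p j ∈ S)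
    (j : ℕ) (hq : M / (r - 1) ^ 2 < |rec2 (2 * r * Real.cos θ) (r ^ 2) p j|) :
    ∑' n, (p n : ℂ) * lam ^ n ≠ 0 := by
  intro h0
  have hr0 : (r : ℂ) ≠ 0 := by exact_mod_cast (by linarith : r ≠ 0)
  have hr1 : r - 1 ≠ 0 := by linarith
  have hpM : ∀ n, |p n| ≤ M := fun n => by
    obtain ⟨C, hC⟩ := hbd.exists_norm_le
    rw [hM]
    exact le_csSup ⟨C, by rintro _ ⟨s, hs, rfl⟩; exact hC s hs⟩ ⟨p n, hp n, rfl⟩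
  have hnl : ‖lam‖ = r⁻¹ := by
    rw [hlam, norm_mul, Complex.norm_exp_ofReal_mul_I, norm_div, Complex.norm_real,
      Real.norm_of_nonneg (by linarith)]
    simp
  have hl : ‖lam‖ < 1 := hnl ▸ inv_lt_one_of_one_lt₀ hr
  have hT : ∀ n, ‖scaledTail p lam n‖ ≤ M / (r - 1) := fun n => by
    refine (norm_scaledTail_le hpM hl n).trans_eq ?_
    rw [hnl]
    have : r ≠ 0 := by linarith
    have : 1 - r⁻¹ ≠ 0 := by
      rw [hnl] at hl
      linarith
    field_simp
  set β : ℂ := r * Complex.exp (θ * Complex.I) with hβ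
  set α : ℂ := r * Complex.exp (-(θ * Complex.I)) with hα
  have hee : Complex.exp (-(θ * Complex.I)) * Complex.exp (θ * Complex.I) = 1 := by
    rw [← Complex.exp_add]
    simp
  have hαl : α * lam = 1 := by
    rw [hα, hlam]
    field_simp
    exact hee
  have ha : ((2 * r * Real.cos θ : ℝ) : ℂ) = α + β := by
    rw [hα, hβ]
    push_cast
    rw [Complex.cos, ← neg_mul]
    ring
  have hb : ((r ^ 2 : ℝ) : ℂ) = α * β := by
    rw [hα, hβ]
    push_cast
    linear_combination -(r : ℂ) ^ 2 * hee
  have hnβ : ‖β‖ = r := by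
    rw [hβ, norm_mul, Complex.norm_exp_ofReal_mul_I, Complex.norm_real,
      Real.norm_of_nonneg (by linarith), mul_one]
  have hβim : β.im ≠ 0 := by
    intro h
    have h1 : β = ((r ^ 2 : ℝ) : ℂ) * lam := by
      rw [hβ, hlam]
      push_cast
      field_simp
    rw [h1, Complex.im_ofReal_mul] at h
    exact (mul_ne_zero (by positivity) him) h
  set q := rec2 (2 * r * Real.cos θ) (r ^ 2) p with hqdef
  have hrec : ∀ n, (q (n + 1) : ℂ) - β * q n = -scaledTail p lam (n + 1) :=
    rec2_sub_eq hpM hl h0 hαl ha hb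
  have hstep : ∀ n, ‖(q (n + 1) : ℂ) - β * q n‖ ≤ M / (r - 1) := fun n => by
    rw [hrec, norm_neg]
    exact hT _
  have hbound : ∀ n, ‖(q n : ℂ)‖ ≤ M / (r - 1) / |β.im| := fun n => by
    rw [le_div_iff₀ (abs_pos.mpr hβim), Complex.norm_real, Real.norm_eq_abs]
    have h1 := (Complex.abs_im_le_norm _).trans (hstep n)
    rw [Complex.sub_im, Complex.im_mul_ofReal, Complex.ofReal_im, zero_sub, abs_neg, abs_mul] at h1
    linarith
  have hfin := norm_le_of_bounded_of_expanding (fun n => (q n : ℂ)) β _ _ (hnβ ▸ hr)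
    hbound hstep j
  rw [hnβ, Complex.norm_real, Real.norm_eq_abs, div_div, ← sq] at hfin
  linarith
end

section
/- Let S be a nonempty symmetric normalized bounded set of real numbers with M = sup_{s∈S} |s|, and let λ = (1/r)e^{iθ} lie in the open unit disc with θ ∈ (0, π/2] and r² − 2r·cos(θ) > 1. Let (p_j)_{j≥0} be a sequence with all p_j ∈ S and p_0 ≠ 0, and define (q_j)_{j≥0} by q_0 = p_0, q_1 = p_1 + 2r·cos(θ)·q_0, and q_{j+2} = p_{j+2} + 2r·cos(θ)·q_{j+1} − r²·q_j. Then λ is a root of ∑_{j=0}^∞ p_j z^j if and only if |q_j| ≤ M/(r² − 2r·cos(θ) − 1) for every index j. -/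
/-!
Write `a = 2 r cos θ`, `b = r ^ 2` and `q = rec2 a b p`. The number `lam` satisfies
`b lam ^ 2 - a lam + 1 = 0`, so the generating function of `p` is that of `q` times
`1 - a z + b z ^ 2`, a polynomial vanishing at `lam`. At the level of partial sums this reads
`∑_{k ≤ n + 1} p k * lam ^ k = (q (n + 1) - b * lam * q n) * lam ^ (n + 1)`
(`sum_range_eq_rec2`), and both implications follow from this identity.

* If `q` is bounded, the right-hand side tends to `0`, so the series sums to `0`.
* If the series sums to `0`, the left-hand side is minus a tail, of size `O(|lam| ^ (n + 2))`, so
  `q (n + 1) - b * lam * q n` is bounded. As `q` is real and `lam` is not, taking imaginary parts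
  shows that `q` is bounded (`rec2_bounded_of_hasSum_zero`). Any bound then improves to the
  explicit one: `b * q j = p (j + 2) + a * q (j + 1) - q (j + 2)` gives
  `b * K ≤ M + (a + 1) * K` for `K = sup |q|` (`abs_rec2_le_of_bounded`).
-/

open Pointwise

/-- The partial sums of `∑ p k * z ^ k` at a root `z` of `1 - a z + b z ^ 2`. -/
lemma sum_range_eq_rec2 (a b : ℝ) (p : ℕ → ℝ) (z : ℂ) (hz : (b : ℂ) * z ^ 2 - a * z + 1 = 0)
    (n : ℕ) :
    ∑ k ∈ Finset.range (n + 2), (p k : ℂ) * z ^ k =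
      ((rec2 a b p (n + 1) : ℂ) - b * z * rec2 a b p n) * z ^ (n + 1) := by
  induction n with
  | zero =>
    simp only [Finset.sum_range_succ, Finset.sum_range_zero, rec2]
    push_cast
    linear_combination (p 0 : ℂ) * hz
  | succ n ih =>
    rw [Finset.sum_range_succ, ih]
    simp only [rec2]
    push_cast
    linear_combination (rec2 a b p (n + 1) : ℂ) * z ^ (n + 1) * hz

/-- If the series vanishes at a non-real root of `1 - a z + b z ^ 2` in the unit disc, the
sequence `rec2 a b p` is bounded. -/
lemma rec2_bounded_of_hasSum_zero (a b M : ℝ) (p : ℕ → ℝ) (z : ℂ)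
    (hz : (b : ℂ) * z ^ 2 - a * z + 1 = 0) (hz1 : ‖z‖ < 1) (hb : 0 < b) (him : z.im ≠ 0)
    (hp : ∀ j, |p j| ≤ M) (h : HasSum (fun n => (p n : ℂ) * z ^ n) 0) :
    ∃ C, ∀ j, |rec2 a b p j| ≤ C := by
  have hz0 : 0 < ‖z‖ := norm_pos_iff.2 fun h0 => him (by simp [h0])
  refine ⟨M * ‖z‖ / (1 - ‖z‖) / (b * |z.im|), fun n => ?_⟩
  have htail := norm_sub_le_of_geometric_bound_of_hasSum hz1 (C := M) (fun n => by
    rw [norm_mul, norm_pow, Complex.norm_real, Real.norm_eq_abs]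
    exact mul_le_mul_of_nonneg_right (hp n) (by positivity)) h (n + 2)
  rw [sub_zero, sum_range_eq_rec2 a b p z hz, norm_mul, norm_pow,
    show M * ‖z‖ ^ (n + 2) / (1 - ‖z‖) = M * ‖z‖ / (1 - ‖z‖) * ‖z‖ ^ (n + 1) by ring] at htail
  have hw := le_of_mul_le_mul_right htail (by positivity)
  -- The imaginary part of `q (n + 1) - b z q n` is `-b (im z) q n`, as `q` is real.
  have hi := (Complex.abs_im_le_norm _).trans hw
  rw [le_div_iff₀ (by positivity)]
  refine le_of_eq_of_le ?_ hi
  simp [abs_mul, abs_of_pos hb, mul_comm]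

/-- If `rec2 a b p` is bounded at all, its supremum satisfies the explicit bound. -/
lemma abs_rec2_le_of_bounded (a b M C : ℝ) (p : ℕ → ℝ) (ha : 0 ≤ a) (hab : 1 < b - a)
    (hp : ∀ j, |p j| ≤ M) (hC : ∀ j, |rec2 a b p j| ≤ C) (j : ℕ) :
    |rec2 a b p j| ≤ M / (b - a - 1) := by
  have hbdd : BddAbove (Set.range fun j => |rec2 a b p j|) := ⟨C, by rintro _ ⟨j, rfl⟩; exact hC j⟩
  have hK : ∀ j, |rec2 a b p j| ≤ ⨆ j, |rec2 a b p j| := le_ciSup hbdd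
  set K := ⨆ j, |rec2 a b p j|
  have hb : 0 < b := by linarith
  have hstep : K ≤ (M + (a + 1) * K) / b := by
    refine ciSup_le fun j => ?_
    have e : rec2 a b p (j + 2) = p (j + 2) + a * rec2 a b p (j + 1) - b * rec2 a b p j := rfl
    have h1 := abs_le.1 (hK (j + 1))
    have h2 := abs_le.1 (hK (j + 2))
    have h3 := abs_le.1 (hp (j + 2))
    have h4 := mul_le_mul_of_nonneg_left h1.1 ha
    have h5 := mul_le_mul_of_nonneg_left h1.2 ha
    rw [le_div_iff₀ hb, mul_comm, ← abs_of_pos hb, ← abs_mul, abs_of_pos hb]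
    exact abs_le.2 ⟨by linarith, by linarith⟩
  refine (hK j).trans ?_
  rw [le_div_iff₀ hb] at hstep
  rw [le_div_iff₀ (by linarith)]
  linarith

/-- If `rec2 a b p` is bounded, the series vanishes at every root of `1 - a z + b z ^ 2` in the
unit disc. -/
lemma hasSum_zero_of_rec2_bounded (a b M C : ℝ) (p : ℕ → ℝ) (z : ℂ)
    (hz : (b : ℂ) * z ^ 2 - a * z + 1 = 0) (hz1 : ‖z‖ < 1)
    (hp : ∀ j, |p j| ≤ M) (hC : ∀ j, |rec2 a b p j| ≤ C) :
    HasSum (fun n => (p n : ℂ) * z ^ n) 0 := by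
  have hs : Summable (fun n => (p n : ℂ) * z ^ n) := by
    refine Summable.of_norm_bounded
      ((summable_geometric_of_lt_one (norm_nonneg z) hz1).mul_left M) fun n => ?_
    rw [norm_mul, norm_pow, Complex.norm_real, Real.norm_eq_abs]
    exact mul_le_mul_of_nonneg_right (hp n) (by positivity)
  have hlim : Filter.Tendsto (fun n => ∑ k ∈ Finset.range (n + 2), (p k : ℂ) * z ^ k)
      Filter.atTop (nhds 0) := by
    simp_rw [sum_range_eq_rec2 a b p z hz]
    have hgeo : Filter.Tendsto (fun n : ℕ => (C + ‖(b : ℂ) * z‖ * C) * ‖z‖ ^ (n + 1))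
        Filter.atTop (nhds 0) := by
      simpa using ((Filter.tendsto_add_atTop_iff_nat 1).2
        (tendsto_pow_atTop_nhds_zero_of_lt_one (norm_nonneg z) hz1)).const_mul
          (C + ‖(b : ℂ) * z‖ * C)
    refine squeeze_zero_norm (fun n => ?_) hgeo
    rw [norm_mul, norm_pow]
    refine mul_le_mul_of_nonneg_right ((norm_sub_le _ _).trans ?_) (by positivity)
    rw [norm_mul _ (rec2 a b p n : ℂ), Complex.norm_real, Complex.norm_real, Real.norm_eq_abs,
      Real.norm_eq_abs]
    exact add_le_add (hC _) (mul_le_mul_of_nonneg_left (hC _) (norm_nonneg _))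
  have h0 := tendsto_nhds_unique hlim
    ((Filter.tendsto_add_atTop_iff_nat 2).2 hs.hasSum.tendsto_sum_nat)
  rw [h0]
  exact hs.hasSum

theorem stmt10 (S : Set ℝ) (hne : S.Nonempty) (hbd : Bornology.IsBounded S)
    (hsym : S = -S) (hnorm : NormalizedSet S)
    (M : ℝ) (hM : M = sSup ((fun s => |s|) '' S))
    (r θ : ℝ) (hr : 1 < r) (hθ : θ ∈ Set.Ioc 0 (Real.pi / 2))
    (hgt : 1 < r ^ 2 - 2 * r * Real.cos θ)
    (lam : ℂ) (hlam : lam = (1 / (r : ℂ)) * Complex.exp (θ * Complex.I))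
    (p : ℕ → ℝ) (hp : ∀ j, p j ∈ S) (hp0 : p 0 ≠ 0) :
    HasSum (fun n => (p n : ℂ) * lam ^ n) 0 ↔
      ∀ j, |rec2 (2 * r * Real.cos θ) (r ^ 2) p j| ≤
        M / (r ^ 2 - 2 * r * Real.cos θ - 1) := by
  have hr0 : 0 < r := by linarith
  have hcos : 0 ≤ Real.cos θ :=
    Real.cos_nonneg_of_mem_Icc ⟨by linarith [hθ.1, Real.pi_pos], hθ.2⟩
  have hsin : 0 < Real.sin θ :=
    Real.sin_pos_of_pos_of_lt_pi hθ.1 (by linarith [hθ.2, Real.pi_pos])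
  have hpM : ∀ j, |p j| ≤ M := by
    obtain ⟨R, hR⟩ := hbd.exists_norm_le
    intro j
    rw [hM]
    refine le_csSup ⟨R, ?_⟩ ⟨p j, hp j, rfl⟩
    rintro _ ⟨s, hs, rfl⟩
    exact hR s hs
  have hlam' : lam = (1 / (r : ℂ)) * (Complex.cos θ + Complex.sin θ * Complex.I) := by
    rw [hlam, Complex.exp_mul_I]
  have hroot : ((r ^ 2 : ℝ) : ℂ) * lam ^ 2 - ((2 * r * Real.cos θ : ℝ) : ℂ) * lam + 1 = 0 := by
    have hrc : (r : ℂ) ≠ 0 := by exact_mod_cast hr0.ne'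
    rw [hlam']
    push_cast
    field_simp
    linear_combination (Complex.sin θ) ^ 2 * Complex.I_sq - Complex.sin_sq_add_cos_sq (θ : ℂ)
  have hnormlam : ‖lam‖ < 1 := by
    rw [hlam, norm_mul, Complex.norm_exp_ofReal_mul_I, mul_one, norm_div, norm_one,
      Complex.norm_real, Real.norm_of_nonneg hr0.le]
    exact (div_lt_one hr0).2 hr
  have him : lam.im ≠ 0 := by
    have : lam = ((1 / r * Real.cos θ : ℝ) : ℂ) + ((1 / r * Real.sin θ : ℝ) : ℂ) * Complex.I := by
      rw [hlam']
      push_cast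
      ring
    rw [this, Complex.add_im, Complex.ofReal_im, Complex.im_ofReal_mul, Complex.I_im]
    have : 0 < 1 / r * Real.sin θ := by positivity
    linarith
  constructor
  · intro h
    obtain ⟨C, hC⟩ :=
      rec2_bounded_of_hasSum_zero _ _ M p lam hroot hnormlam (by positivity) him hpM h
    exact abs_rec2_le_of_bounded _ _ M C p (by positivity) hgt hpM hC
  · exact fun h => hasSum_zero_of_rec2_bounded _ _ M _ p lam hroot hnormlam hpM h
end
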